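/- arXiv:2006.11568 — 5 statements merged into one kernel-verified Lean document; each statement's English description precedes it below -/
import Mathlib

section
/- Fix integers m ≥ 3 and k with 2 ≤ k ≤ m−1. A function u : T_m → ℝ is sublevel k-quasiconvex if and only if for every vertex x ∈ T_m one has u(x) ≤ min_{Y ⊆ S(x), |Y| = k} max_{y ∈ Y} u(y), i.e. u(x) is at most the k-th smallest value of u on S(x); equivalently, u(x) ≤ max_{1≤i≤k} u(y_i) for every choice of k pairwise distinct successors y_1,...,y_k ∈ S(x). -/
open Filter Topology

/-- The maximum of `u` over the successors `x ++ [i]`, `i ∈ Y`. -/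
noncomputable def kMaxOn (m : ℕ) (u : List (Fin m) → ℝ) (x : List (Fin m))
    (Y : Finset (Fin m)) : ℝ :=
  sSup ((fun i : Fin m => u (x ++ [i])) '' (Y : Set (Fin m)))

/-- `min_{Y ⊆ S(x), |Y| = k} max_{y ∈ Y} u(y)`, the k-th smallest value of `u` on `S(x)`. -/
noncomputable def kMinMax (m k : ℕ) (u : List (Fin m) → ℝ) (x : List (Fin m)) : ℝ :=
  sInf (kMaxOn m u x '' {Y : Finset (Fin m) | Y.card = k})

/-- `u` is `k`-quasiconvex on the regular `m`-branching tree. -/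
def KQuasiconvex (m k : ℕ) (u : List (Fin m) → ℝ) : Prop :=
  ∀ x : List (Fin m), u x ≤ kMinMax m k u x

/-- Truncation of a branch `π` to level `l`. -/
def branchTrunc (m : ℕ) (π : ℕ → Fin m) (l : ℕ) : List (Fin m) :=
  List.ofFn fun i : Fin l => π i

/-- `ψ(π) = Σ_{j ≥ 1} a_j m^{-j}`. -/
noncomputable def psiBranch (m : ℕ) (π : ℕ → Fin m) : ℝ :=
  ∑' j : ℕ, ((π j : ℕ) : ℝ) / (m : ℝ) ^ (j + 1)

/-- `ψ(x) = Σ_{j=1}^{|x|} a_j m^{-j}` for a vertex `x`. -/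
noncomputable def psiVertex (m : ℕ) (x : List (Fin m)) : ℝ :=
  ∑ i : Fin x.length, ((x.get i : ℕ) : ℝ) / (m : ℝ) ^ ((i : ℕ) + 1)

/-- The class `QC_k(f)`: `k`-quasiconvex functions lying below `f` on the boundary. -/
def QCSet (m k : ℕ) (f : ℝ → ℝ) : Set (List (Fin m) → ℝ) :=
  {u | KQuasiconvex m k u ∧
    ∀ π : ℕ → Fin m, limsup (fun l => u (branchTrunc m π l)) atTop ≤ f (psiBranch m π)}

/-- The `k`-quasiconvex envelope `u*_f` of a boundary datum `f`. -/
noncomputable def qcEnvelope (m k : ℕ) (f : ℝ → ℝ) (x : List (Fin m)) : ℝ :=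
  sSup ((fun u : List (Fin m) → ℝ => u x) '' QCSet m k f)

/-- The class `𝔔C_k(g)`: `k`-quasiconvex functions lying below `g` inside the tree. -/
def OBSet (m k : ℕ) (g : List (Fin m) → ℝ) : Set (List (Fin m) → ℝ) :=
  {u | KQuasiconvex m k u ∧ ∀ x, u x ≤ g x}

/-- The `k`-quasiconvex envelope `u⋆_g` of an obstacle `g` inside the tree. -/
noncomputable def obEnvelope (m k : ℕ) (g : List (Fin m) → ℝ) (x : List (Fin m)) : ℝ :=
  sSup ((fun u : List (Fin m) → ℝ => u x) '' OBSet m k g)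

/-- A finite `k`-branching subtree of the `m`-branching tree with root `x`:
`x ∈ B`, every vertex of `B` extends `x`, `B` is closed under taking the parent
(down to `x`), and every vertex of `B` has either `0` or exactly `k` of its `m`
successors in `B`. -/
def IsKSubtree (m k : ℕ) (x : List (Fin m)) (B : Finset (List (Fin m))) : Prop :=
  x ∈ B ∧
  (∀ y ∈ B, ∃ s : List (Fin m), y = x ++ s) ∧
  (∀ y ∈ B, y ≠ x → y.dropLast ∈ B) ∧
  (∀ y ∈ B, {i : Fin m | y ++ [i] ∈ B}.ncard = 0 ∨ {i : Fin m | y ++ [i] ∈ B}.ncard = k)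

/-- The set `E(B)` of leaves (terminal nodes) of the subtree `B`. -/
def treeLeaves (m : ℕ) (B : Finset (List (Fin m))) : Set (List (Fin m)) :=
  {y | y ∈ B ∧ ∀ i : Fin m, y ++ [i] ∉ B}

/-- A set `C` is `k`-convex if the root of every finite `k`-branching subtree
with all its leaves in `C` belongs to `C`. -/
def KConvexSet (m k : ℕ) (C : Set (List (Fin m))) : Prop :=
  ∀ (x : List (Fin m)) (B : Finset (List (Fin m))),
    IsKSubtree m k x B → treeLeaves m B ⊆ C → x ∈ C

/-- `u` is sublevel `k`-quasiconvex: every sublevel set is `k`-convex. -/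
def SublevelKQuasiconvex (m k : ℕ) (u : List (Fin m) → ℝ) : Prop :=
  ∀ α : ℝ, KConvexSet m k {x | u x ≤ α}

/-- sublevel `k`-quasiconvexity is equivalent to the local inequality
`u(x) ≤ min_{Y ⊆ S(x), |Y| = k} max_{y ∈ Y} u(y)` at every vertex. -/
theorem sublevelKQuasiconvex_iff_local (m k : ℕ) (hm : 3 ≤ m) (hk : 2 ≤ k) (hkm : k ≤ m - 1)
    (u : List (Fin m) → ℝ) :
    SublevelKQuasiconvex m k u ↔ ∀ x : List (Fin m), u x ≤ kMinMax m k u x := by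
  have hne : {Y : Finset (Fin m) | Y.card = k}.Nonempty := by
    obtain ⟨Y, -, hY⟩ := Finset.exists_subset_card_eq
      (s := (Finset.univ : Finset (Fin m))) (n := k) (by simp; omega)
    exact ⟨Y, hY⟩
  constructor
  · intro h x
    refine le_csInf (hne.image _) ?_
    rintro _ ⟨Y, hY, rfl⟩
    have hY' : Y.card = k := hY
    have key : ∀ z ∈ insert x (Y.image fun i => x ++ [i]), ∀ i : Fin m,
        z ++ [i] ∈ insert x (Y.image fun i => x ++ [i]) ↔ z = x ∧ i ∈ Y := by
      intro z hz i
      simp only [Finset.mem_insert, Finset.mem_image] at hz ⊢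
      constructor
      · rintro (h1 | ⟨j, hj, h1⟩)
        · exfalso
          have h2 := congrArg List.length h1
          rcases hz with rfl | ⟨j, hj, rfl⟩ <;> simp at h2 <;> omega
        · obtain ⟨h2, h3⟩ := List.append_inj' h1 rfl
          simp at h3
          subst h2 h3
          exact ⟨rfl, hj⟩
      · rintro ⟨rfl, hi⟩
        exact Or.inr ⟨i, hi, rfl⟩
    refine h (kMaxOn m u x Y) x (insert x (Y.image fun i => x ++ [i])) ⟨by simp, ?_, ?_, ?_⟩ ?_
    · intro y hy
      simp only [Finset.mem_insert, Finset.mem_image] at hy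
      rcases hy with rfl | ⟨j, hj, rfl⟩
      · exact ⟨[], by simp⟩
      · exact ⟨[j], rfl⟩
    · intro y hy hyx
      simp only [Finset.mem_insert, Finset.mem_image] at hy
      rcases hy with rfl | ⟨j, hj, rfl⟩
      · exact absurd rfl hyx
      · simp
    · intro y hy
      have h1 := key y hy
      simp only [h1]
      by_cases hyx : y = x
      · right
        simp [hyx, hY']
      · left
        simp [hyx]
    · rintro y ⟨hy, hl⟩
      have h1 := key y hy
      have hyx : y ≠ x := by
        rintro rfl
        obtain ⟨i, hi⟩ : Y.Nonempty := Finset.card_pos.mp (by omega)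
        exact hl i ((h1 i).2 ⟨rfl, hi⟩)
      simp only [Finset.mem_insert, Finset.mem_image] at hy
      rcases hy with rfl | ⟨j, hj, rfl⟩
      · exact absurd rfl hyx
      · have hfin : ((fun i : Fin m => u (x ++ [i])) '' (Y : Set (Fin m))).Finite :=
          (Set.toFinite _).image _
        exact le_csSup hfin.bddAbove ⟨j, hj, rfl⟩
  · intro h α x B hB hl
    obtain ⟨hx, -, -, hc⟩ := hB
    have main : ∀ n : ℕ, ∀ y ∈ B, B.sup List.length - y.length ≤ n → u y ≤ α := by
      intro n
      induction n with
      | zero =>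
        intro y hy hn
        refine hl ⟨hy, fun i hi => ?_⟩
        have := Finset.le_sup (f := List.length) hi
        rw [List.length_append, List.length_singleton] at this
        omega
      | succ n ih =>
        intro y hy hn
        by_cases hleaf : ∀ i : Fin m, y ++ [i] ∉ B
        · exact hl ⟨hy, hleaf⟩
        · push Not at hleaf
          obtain ⟨i₀, hi₀⟩ := hleaf
          classical
          have hcoe : {i : Fin m | y ++ [i] ∈ B} =
              ((Finset.univ.filter fun i : Fin m => y ++ [i] ∈ B : Finset (Fin m)) :
                Set (Fin m)) := by
            ext; simp
          have hcard := hc y hy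
          rw [hcoe, Set.ncard_coe_finset] at hcard
          have hmem : i₀ ∈ Finset.univ.filter fun i : Fin m => y ++ [i] ∈ B := by simp [hi₀]
          have hk' := hcard.resolve_left (Finset.card_pos.mpr ⟨i₀, hmem⟩).ne'
          have hfin : (kMaxOn m u y '' {Y : Finset (Fin m) | Y.card = k}).Finite :=
            (Set.toFinite _).image _
          refine (h y).trans ((csInf_le hfin.bddBelow ⟨_, hk', rfl⟩).trans ?_)
          refine csSup_le (Set.Nonempty.image _ ⟨i₀, hmem⟩) ?_
          rintro _ ⟨i, hi, rfl⟩
          have hi' : y ++ [i] ∈ B := by simpa using hi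
          refine ih _ hi' ?_
          rw [List.length_append, List.length_singleton]
          omega
    exact main _ x hx le_rfl
end

section
/- Fix integers m ≥ 3 and j, k with 2 ≤ j ≤ k ≤ m−1. Let u, v : T_m → ℝ be bounded functions satisfying, for every vertex x, u(x) ≥ min_{Y ⊆ S(x), |Y| = k} max_{y ∈ Y} u(y) and v(x) ≤ min_{Y ⊆ S(x), |Y| = j} max_{y ∈ Y} v(y). Assume that for every branch π of T_m, limsup_{l→∞} u(π|_l) ≥ liminf_{l→∞} v(π|_l). Then u(x) ≥ v(x) for every vertex x ∈ T_m. -/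
open Filter Topology

theorem cp_step (m j k : ℕ) (hj : 2 ≤ j) (hjk : j ≤ k)
    (hkm : k ≤ m) (u v : List (Fin m) → ℝ) (x : List (Fin m))
    (hu : kMinMax m k u x ≤ u x) (hv : v x ≤ kMinMax m j v x) :
    ∃ i : Fin m, u (x ++ [i]) ≤ u x ∧ v x ≤ v (x ++ [i]) := by
  have hfin : ∀ (w : List (Fin m) → ℝ) (n : ℕ),
      (kMaxOn m w x '' {Y : Finset (Fin m) | Y.card = n}).Finite :=
    fun w n => (Set.toFinite _).image _
  have hne : (kMaxOn m u x '' {Y : Finset (Fin m) | Y.card = k}).Nonempty := by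
    obtain ⟨Y, -, hY⟩ := Finset.exists_subset_card_eq
      (s := (Finset.univ : Finset (Fin m))) (n := k) (by simpa using hkm)
    exact ⟨_, Y, hY, rfl⟩
  obtain ⟨Y, hY, hYe⟩ := hne.csInf_mem (hfin u k)
  have hY' : Y.card = k := hY
  have h1 : kMaxOn m u x Y ≤ u x := by rw [hYe]; exact hu
  obtain ⟨Z, hZY, hZ⟩ := Finset.exists_subset_card_eq (s := Y) (n := j) (by omega)
  have hZne : Z.Nonempty := Finset.card_pos.mp (by omega)
  have h2 : v x ≤ kMaxOn m v x Z :=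
    hv.trans (csInf_le (hfin v j).bddBelow ⟨Z, hZ, rfl⟩)
  have hZn : ((fun i : Fin m => v (x ++ [i])) '' (Z : Set (Fin m))).Nonempty :=
    (Finset.coe_nonempty.mpr hZne).image _
  obtain ⟨i, hi, hie⟩ := hZn.csSup_mem ((Set.toFinite _).image _)
  refine ⟨i, le_trans (le_csSup ((Set.toFinite _).image _).bddAbove ⟨i, hZY hi, rfl⟩) h1, ?_⟩
  have hie' : v (x ++ [i]) = kMaxOn m v x Z := hie
  rw [hie']; exact h2

/-- The vertices of the branch generated by a choice function. -/
def cpPath (m : ℕ) (h : List (Fin m) → Fin m) : ℕ → List (Fin m)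
  | 0 => []
  | n + 1 => cpPath m h n ++ [h (cpPath m h n)]

theorem cp_trunc (m : ℕ) (h : List (Fin m) → Fin m) (n : ℕ) :
    branchTrunc m (fun l => h (cpPath m h l)) n = cpPath m h n := by
  induction n with
  | zero => simp [branchTrunc, cpPath]
  | succ n ih =>
    unfold branchTrunc at ih ⊢
    rw [List.ofFn_succ', List.concat_eq_append]
    simp only [Fin.val_castSucc, Fin.val_last]
    rw [ih, cpPath]

/-- comparison principle for super- and subsolutions with ordered boundary data. -/
theorem comparison_principle (m j k : ℕ) (hm : 3 ≤ m) (hj : 2 ≤ j) (hjk : j ≤ k)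
    (hkm : k ≤ m - 1) (u v : List (Fin m) → ℝ)
    (hub : ∃ C : ℝ, ∀ x, |u x| ≤ C) (hvb : ∃ C : ℝ, ∀ x, |v x| ≤ C)
    (hu : ∀ x : List (Fin m), kMinMax m k u x ≤ u x)
    (hv : ∀ x : List (Fin m), v x ≤ kMinMax m j v x)
    (hbdry : ∀ π : ℕ → Fin m,
      liminf (fun l => v (branchTrunc m π l)) atTop ≤
        limsup (fun l => u (branchTrunc m π l)) atTop) :
    ∀ x : List (Fin m), v x ≤ u x := by
  intro x0
  by_contra! hlt
  have hs := fun x => cp_step m j k hj hjk (by omega) u v x (hu x) (hv x)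
  choose f hf1 hf2 using hs
  let h : List (Fin m) → Fin m := fun x =>
    if hx : x.length < x0.length then x0[x.length] else f x
  have hlen : ∀ n, (cpPath m h n).length = n := by
    intro n
    induction n with
    | zero => simp [cpPath]
    | succ n ih => simp [cpPath, ih]
  have htake : ∀ n, n ≤ x0.length → cpPath m h n = x0.take n := by
    intro n
    induction n with
    | zero => simp [cpPath]
    | succ n ih =>
      intro hn
      have e : h (cpPath m h n) = x0[n] := by
        have : (cpPath m h n).length < x0.length := by rw [hlen]; omega
        simp only [h, hlen]
        exact dif_pos (by omega)
      rw [cpPath, e, ih (by omega)]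
      simp
  have hmono : ∀ n, u (cpPath m h (x0.length + n)) ≤ u x0 ∧
      v x0 ≤ v (cpPath m h (x0.length + n)) := by
    intro n
    induction n with
    | zero => simp [htake x0.length le_rfl]
    | succ n ih =>
      have e : h (cpPath m h (x0.length + n)) = f (cpPath m h (x0.length + n)) := by
        have : ¬ (cpPath m h (x0.length + n)).length < x0.length := by rw [hlen]; omega
        simp only [h, this, dite_false]
      rw [← add_assoc, cpPath, e]
      exact ⟨(hf1 _).trans ih.1, ih.2.trans (hf2 _)⟩
  have hb := hbdry (fun l => h (cpPath m h l))
  simp only [cp_trunc] at hb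
  obtain ⟨C, hC⟩ := hub
  obtain ⟨D, hD⟩ := hvb
  have hev : ∀ᶠ l in atTop, u (cpPath m h l) ≤ u x0 ∧ v x0 ≤ v (cpPath m h l) := by
    filter_upwards [eventually_ge_atTop x0.length] with l hl
    obtain ⟨n, rfl⟩ := Nat.exists_eq_add_of_le hl
    exact hmono n
  have h1 : limsup (fun l => u (cpPath m h l)) atTop ≤ u x0 :=
    limsup_le_of_le (isCoboundedUnder_le_of_le atTop (x := -C)
      fun l => (abs_le.mp (hC _)).1) (hev.mono fun _ h => h.1)
  have h2 : v x0 ≤ liminf (fun l => v (cpPath m h l)) atTop :=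
    le_liminf_of_le (isCoboundedUnder_ge_of_le atTop (x := D)
      fun l => (abs_le.mp (hD _)).2) (hev.mono fun _ h => h.2)
  linarith
end

section
/- Fix integers m ≥ 3 and j, k with 2 ≤ j ≤ k ≤ m−1. Let f, g : [0,1] → ℝ be continuous with f(z) ≥ g(z) for all z ∈ [0,1]. Suppose u, v : T_m → ℝ are bounded, u satisfies u(x) = min_{Y ⊆ S(x), |Y| = k} max_{y ∈ Y} u(y) for every vertex x together with lim_{l→∞} u(π|_l) = f(ψ(π)) for every branch π, and v satisfies v(x) = min_{Y ⊆ S(x), |Y| = j} max_{y ∈ Y} v(y) for every vertex x together with lim_{l→∞} v(π|_l) = g(ψ(π)) for every branch π. Then u(x) ≥ v(x) for every vertex x ∈ T_m. -/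
open Filter Topology

theorem step_aux (m j k : ℕ) (hj : 2 ≤ j) (hjk : j ≤ k) (hkm : k ≤ m)
    (u v : List (Fin m) → ℝ)
    (x : List (Fin m)) (hu : u x = kMinMax m k u x) (hv : v x = kMinMax m j v x) :
    ∃ i : Fin m, u (x ++ [i]) ≤ u x ∧ v x ≤ v (x ++ [i]) := by
  have hne : (kMaxOn m u x '' {Y : Finset (Fin m) | Y.card = k}).Nonempty := by
    obtain ⟨Y, _, hY⟩ := Finset.exists_subset_card_eq
      (s := (Finset.univ : Finset (Fin m))) (n := k) (by simpa using hkm)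
    exact ⟨_, Y, hY, rfl⟩
  have hmem := hne.csInf_mem ((Set.toFinite _).image _)
  obtain ⟨Y, hYc, hY⟩ := hmem
  have hYc' : Y.card = k := hYc
  have hYu : ∀ i ∈ Y, u (x ++ [i]) ≤ u x := by
    intro i hi
    rw [hu, kMinMax, ← hY]
    exact le_csSup ((Set.toFinite _).image _).bddAbove ⟨i, hi, rfl⟩
  classical
  let Z : Finset (Fin m) := Finset.univ.filter fun i => v (x ++ [i]) < v x
  have hZ : Z.card < j := by
    by_contra hcon
    push Not at hcon
    obtain ⟨W, hW, hWc⟩ := Finset.exists_subset_card_eq hcon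
    have h1 : v x ≤ kMaxOn m v x W := by
      rw [hv]
      exact csInf_le ((Set.toFinite _).image _).bddBelow ⟨W, hWc, rfl⟩
    have hWn : W.Nonempty := by
      rw [← Finset.card_pos]; omega
    obtain ⟨i, hi, he⟩ := ((hWn.to_set).image
      (fun i : Fin m => v (x ++ [i]))).csSup_mem ((Set.toFinite _).image _)
    have h2 := (Finset.mem_filter.1 (hW hi)).2
    have h3 : v (x ++ [i]) = kMaxOn m v x W := he
    linarith
  obtain ⟨i, hiY, hiZ⟩ := Finset.exists_mem_notMem_of_card_lt_card
    (show Z.card < Y.card by omega)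
  refine ⟨i, hYu i hiY, ?_⟩
  by_contra hcon
  exact hiZ (Finset.mem_filter.2 ⟨Finset.mem_univ _, not_le.1 hcon⟩)

theorem psi_mem_aux (m : ℕ) (hm : 3 ≤ m) (π : ℕ → Fin m) :
    psiBranch m π ∈ Set.Icc (0 : ℝ) 1 := by
  have hm' : (3 : ℝ) ≤ m := by exact_mod_cast hm
  have hm0 : (0 : ℝ) < m := by linarith
  refine ⟨tsum_nonneg fun n => by positivity, ?_⟩
  refine Real.tsum_le_of_sum_range_le (fun n => by positivity) fun n => ?_
  have : ∑ i ∈ Finset.range n, ((π i : ℕ) : ℝ) / (m : ℝ) ^ (i + 1) ≤ 1 - 1 / (m : ℝ) ^ n := by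
    induction n with
    | zero => simp
    | succ n ih =>
      rw [Finset.sum_range_succ]
      have h1 : ((π n : ℕ) : ℝ) ≤ m - 1 := by
        have h : (π n : ℕ) + 1 ≤ m := (π n).2
        have : (((π n : ℕ) : ℝ)) + 1 ≤ m := by exact_mod_cast h
        linarith
      have h2 : ((π n : ℕ) : ℝ) / (m : ℝ) ^ (n + 1) ≤ (m - 1) / (m : ℝ) ^ (n + 1) := by
        gcongr
      have h3 : ((m : ℝ) - 1) / (m : ℝ) ^ (n + 1) = 1 / (m : ℝ) ^ n - 1 / (m : ℝ) ^ (n + 1) := by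
        field_simp
        ring
      linarith
  have h : (0 : ℝ) ≤ 1 / (m : ℝ) ^ n := by positivity
  linarith

/-- solutions of the `k`- and `j`-equations with ordered continuous boundary
data `f ≥ g` are ordered. -/
theorem comparison_solutions (m j k : ℕ) (hm : 3 ≤ m) (hj : 2 ≤ j) (hjk : j ≤ k)
    (hkm : k ≤ m - 1) (f g : ℝ → ℝ)
    (hf : ContinuousOn f (Set.Icc (0:ℝ) 1)) (hg : ContinuousOn g (Set.Icc (0:ℝ) 1))
    (hfg : ∀ z ∈ Set.Icc (0:ℝ) 1, g z ≤ f z)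
    (u v : List (Fin m) → ℝ)
    (hub : ∃ C : ℝ, ∀ x, |u x| ≤ C) (hvb : ∃ C : ℝ, ∀ x, |v x| ≤ C)
    (hu : ∀ x : List (Fin m), u x = kMinMax m k u x)
    (hubdry : ∀ π : ℕ → Fin m,
      Tendsto (fun l => u (branchTrunc m π l)) atTop (nhds (f (psiBranch m π))))
    (hv : ∀ x : List (Fin m), v x = kMinMax m j v x)
    (hvbdry : ∀ π : ℕ → Fin m,
      Tendsto (fun l => v (branchTrunc m π l)) atTop (nhds (g (psiBranch m π)))) :
    ∀ x : List (Fin m), v x ≤ u x := by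
  intro x
  choose c hc using fun x => step_aux m j k hj hjk (by omega) u v x (hu x) (hv x)
  let y : ℕ → List (Fin m) := fun n => Nat.rec x (fun _ z => z ++ [c z]) n
  have hy : ∀ n, y (n + 1) = y n ++ [c (y n)] := fun n => rfl
  have hyu : ∀ n, u (y n) ≤ u x ∧ v x ≤ v (y n) := by
    intro n
    induction n with
    | zero => exact ⟨le_rfl, le_rfl⟩
    | succ n ih =>
      rw [hy]
      exact ⟨(hc _).1.trans ih.1, ih.2.trans (hc _).2⟩
  let π : ℕ → Fin m := fun n => if h : n < x.length then x[n] else c (y (n - x.length))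
  have hπ : ∀ n, branchTrunc m π (n + x.length) = y n := by
    intro n
    induction n with
    | zero =>
      rw [Nat.zero_add]
      apply List.ext_getElem
      · simp [branchTrunc, y]
      · intro i h1 h2
        have h3 : i < x.length := h2
        simp [branchTrunc, π, y, h3]
    | succ n ih =>
      rw [hy, ← ih, show n + 1 + x.length = (n + x.length) + 1 by omega]
      unfold branchTrunc
      rw [List.ofFn_succ', List.concat_eq_append]
      congr 2
      have : π (n + x.length) = c (y n) := by simp [π]
      simpa [← ih, branchTrunc] using this
  have h1 := (tendsto_add_atTop_iff_nat x.length).2 (hubdry π)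
  have h2 := (tendsto_add_atTop_iff_nat x.length).2 (hvbdry π)
  simp only [hπ] at h1 h2
  have h3 := le_of_tendsto' h1 fun n => (hyu n).1
  have h4 := ge_of_tendsto' h2 fun n => (hyu n).2
  have h5 := hfg _ (psi_mem_aux m hm π)
  linarith
end

section
/- Fix integers m ≥ 3 and k with 2 ≤ k ≤ m−1, and let g : T_m → ℝ be bounded below. Then the k-quasiconvex envelope u⋆_g of g is real-valued, k-quasiconvex, and satisfies u⋆_g(x) ≤ g(x) for every x ∈ T_m; moreover, every function u : T_m → ℝ satisfying u(x) ≤ min_{Y ⊆ S(x), |Y| = k} max_{y ∈ Y} u(y) at every vertex and u ≤ g pointwise satisfies u ≤ u⋆_g. Thus u⋆_g is the largest solution of the obstacle problem with obstacle g. -/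
open Filter Topology

theorem kq_iff_aux (m k : ℕ) (hk : 2 ≤ k) (hkm : k ≤ m - 1) (u : List (Fin m) → ℝ)
    (x : List (Fin m)) (c : ℝ) :
    c ≤ kMinMax m k u x ↔ ∀ Y : Finset (Fin m), Y.card = k → ∃ i ∈ Y, c ≤ u (x ++ [i]) := by
  unfold kMinMax
  have hne : (kMaxOn m u x '' {Y : Finset (Fin m) | Y.card = k}).Nonempty := by
    obtain ⟨Y, -, hY⟩ := Finset.exists_subset_card_eq
      (s := (Finset.univ : Finset (Fin m))) (n := k) (by simp; omega)
    exact ⟨_, Y, hY, rfl⟩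
  have hfin : (kMaxOn m u x '' {Y : Finset (Fin m) | Y.card = k}).Finite :=
    (Set.toFinite _).image _
  rw [le_csInf_iff hfin.bddBelow hne, Set.forall_mem_image]
  refine forall_congr' fun Y => forall_congr' fun hY => ?_
  have hYne : Y.Nonempty := by
    rw [← Finset.card_pos]
    have : Y.card = k := hY
    omega
  have hf : ((fun i : Fin m => u (x ++ [i])) '' (Y : Set (Fin m))).Finite :=
    Y.finite_toSet.image _
  unfold kMaxOn
  constructor
  · intro h
    obtain ⟨i, hi, hiu⟩ := Set.Nonempty.csSup_mem (hYne.to_set.image _) hf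
    exact ⟨i, hi, h.trans hiu.ge⟩
  · rintro ⟨i, hi, h⟩
    exact h.trans (le_csSup hf.bddAbove ⟨i, hi, rfl⟩)

/-- for `g` bounded below, the obstacle envelope is `k`-quasiconvex, lies below
`g`, and dominates every solution of the obstacle problem: it is the largest such solution. -/
theorem obstacle_envelope_largest (m k : ℕ) (hm : 3 ≤ m) (hk : 2 ≤ k) (hkm : k ≤ m - 1)
    (g : List (Fin m) → ℝ) (hg : ∃ C : ℝ, ∀ x, C ≤ g x) :
    KQuasiconvex m k (obEnvelope m k g) ∧
    (∀ x : List (Fin m), obEnvelope m k g x ≤ g x) ∧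
    (∀ u : List (Fin m) → ℝ, (∀ x : List (Fin m), u x ≤ kMinMax m k u x) →
      (∀ x : List (Fin m), u x ≤ g x) →
      ∀ x : List (Fin m), u x ≤ obEnvelope m k g x) := by
  obtain ⟨C, hC⟩ := hg
  have hbdd : ∀ x, BddAbove ((fun u : List (Fin m) → ℝ => u x) '' OBSet m k g) := by
    rintro x
    refine ⟨g x, ?_⟩
    rintro _ ⟨u, hu, rfl⟩
    exact hu.2 x
  have hne : ∀ x, ((fun u : List (Fin m) → ℝ => u x) '' OBSet m k g).Nonempty := by
    intro x
    refine ⟨C, fun _ => C, ⟨fun y => ?_, hC⟩, rfl⟩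
    rw [kq_iff_aux m k hk hkm]
    intro Y hY
    obtain ⟨i, hi⟩ : Y.Nonempty := by
      rw [← Finset.card_pos]
      omega
    exact ⟨i, hi, le_refl _⟩
  have hle : ∀ u ∈ OBSet m k g, ∀ x, u x ≤ obEnvelope m k g x := fun u hu x =>
    le_csSup (hbdd x) ⟨u, hu, rfl⟩
  refine ⟨fun x => ?_, fun x => ?_, fun u h1 h2 x => hle u ⟨h1, h2⟩ x⟩
  · refine csSup_le (hne x) ?_
    rintro _ ⟨u, hu, rfl⟩
    rw [kq_iff_aux m k hk hkm]
    intro Y hY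
    obtain ⟨i, hi, h⟩ := (kq_iff_aux m k hk hkm u x _).1 (hu.1 x) Y hY
    exact ⟨i, hi, h.trans (hle u hu _)⟩
  · refine csSup_le (hne x) ?_
    rintro _ ⟨u, hu, rfl⟩
    exact hu.2 x
end

section
/- Fix integers m ≥ 3 and k with 2 ≤ k ≤ m−1, and let g : T_m → ℝ be bounded below. Then for every vertex x outside the coincidence set, i.e. every x with u⋆_g(x) < g(x), the envelope satisfies the equation u⋆_g(x) = min_{Y ⊆ S(x), |Y| = k} max_{y ∈ Y} u⋆_g(y). -/
open Filter Topology

theorem kMaxOn_set_nonempty (m k : ℕ) (hkm : k ≤ m) (u : List (Fin m) → ℝ) (x : List (Fin m)) :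
    (kMaxOn m u x '' {Y : Finset (Fin m) | Y.card = k}).Nonempty := by
  obtain ⟨Y, -, hY⟩ := Finset.exists_subset_card_eq (s := (Finset.univ : Finset (Fin m)))
    (n := k) (by simpa using hkm)
  exact ⟨_, Y, hY, rfl⟩

theorem kMinMax_mono (m k : ℕ) (hk : 2 ≤ k) (hkm : k ≤ m) (u v : List (Fin m) → ℝ)
    (h : ∀ y, u y ≤ v y) (x : List (Fin m)) : kMinMax m k u x ≤ kMinMax m k v x := by
  refine le_csInf (kMaxOn_set_nonempty m k hkm v x) ?_
  rintro _ ⟨Y, hY, rfl⟩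
  have hY' : Y.card = k := hY
  have h1 : kMinMax m k u x ≤ kMaxOn m u x Y :=
    csInf_le (Set.toFinite _).bddBelow ⟨Y, hY, rfl⟩
  refine h1.trans ?_
  have hne : Y.Nonempty := Finset.card_pos.mp (by omega)
  refine csSup_le (Set.Nonempty.image _ (Finset.coe_nonempty.mpr hne)) ?_
  rintro _ ⟨i, hi, rfl⟩
  have h2 : v (x ++ [i]) ≤ kMaxOn m v x Y :=
    le_csSup (Set.toFinite _).bddAbove ⟨i, hi, rfl⟩
  exact (h _).trans h2

theorem const_quasiconvex (m k : ℕ) (hk : 2 ≤ k) (hkm : k ≤ m) (C : ℝ) :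
    KQuasiconvex m k (fun _ => C) := by
  intro x
  refine le_csInf (kMaxOn_set_nonempty m k hkm _ x) ?_
  rintro _ ⟨Y, hY, rfl⟩
  have hY' : Y.card = k := hY
  obtain ⟨i, hi⟩ : Y.Nonempty := Finset.card_pos.mp (by omega)
  exact le_csSup (Set.toFinite _).bddAbove ⟨i, hi, rfl⟩

theorem le_obEnvelope (m k : ℕ) (g u : List (Fin m) → ℝ) (hu : u ∈ OBSet m k g)
    (x : List (Fin m)) : u x ≤ obEnvelope m k g x := by
  refine le_csSup ⟨g x, ?_⟩ ⟨u, hu, rfl⟩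
  rintro _ ⟨w, hw, rfl⟩
  exact hw.2 x

/-- outside the coincidence set the obstacle envelope satisfies the equation. -/
theorem obstacle_equation_off_coincidence (m k : ℕ) (hm : 3 ≤ m) (hk : 2 ≤ k) (hkm : k ≤ m - 1)
    (g : List (Fin m) → ℝ) (hg : ∃ C : ℝ, ∀ x, C ≤ g x) :
    ∀ x : List (Fin m), obEnvelope m k g x < g x →
      obEnvelope m k g x = kMinMax m k (obEnvelope m k g) x := by
  obtain ⟨C, hC⟩ := hg
  have hkm' : k ≤ m := by omega
  have hne : (OBSet m k g).Nonempty := ⟨fun _ => C, const_quasiconvex m k hk hkm' C, hC⟩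
  have hEg : ∀ y, obEnvelope m k g y ≤ g y := by
    intro y
    refine csSup_le (hne.image _) ?_
    rintro _ ⟨w, hw, rfl⟩
    exact hw.2 y
  have hEq : KQuasiconvex m k (obEnvelope m k g) := by
    intro y
    refine csSup_le (hne.image _) ?_
    rintro _ ⟨w, hw, rfl⟩
    exact (hw.1 y).trans (kMinMax_mono m k hk hkm' _ _ (le_obEnvelope m k g w hw) y)
  intro x hx
  refine le_antisymm (hEq x) ?_
  set E := obEnvelope m k g with hE
  classical
  let v : List (Fin m) → ℝ := Function.update E x (min (g x) (kMinMax m k E x))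
  have hvx : v x = min (g x) (kMinMax m k E x) := Function.update_self ..
  have hvy : ∀ y, y ≠ x → v y = E y := fun y hy => Function.update_of_ne hy ..
  have hEv : ∀ y, E y ≤ v y := by
    intro y
    by_cases hy : y = x
    · subst hy
      rw [hvx]
      exact le_min (hEg y) (hEq y)
    · rw [hvy y hy]
  have hv : v ∈ OBSet m k g := by
    constructor
    · intro y
      refine le_trans ?_ (kMinMax_mono m k hk hkm' _ _ hEv y)
      by_cases hy : y = x
      · subst hy
        rw [hvx]
        exact min_le_right _ _
      · rw [hvy y hy]
        exact hEq y
    · intro y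
      by_cases hy : y = x
      · subst hy
        rw [hvx]
        exact min_le_left _ _
      · rw [hvy y hy]
        exact hEg y
  have h := le_obEnvelope m k g v hv x
  rw [hvx] at h
  rcases min_le_iff.mp h with h | h
  · exact absurd hx (not_lt.mpr h)
  · exact h
end
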